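/- arXiv:math/0103011 — 5 statements merged into one kernel-verified Lean document; each statement's English description precedes it below -/
import Mathlib

section
/- For every n ≥ 0 and every face a of I^{n+1} lying in the image of φ_n^-, one has (∂^-R(a))^⊥ = ∂^-R(a^⊥), where the left-hand operator ∂^- is computed in the cube I^{n+1} and the right-hand operator ∂^- is computed in the simplex Δ^n. -/
/-- Positions of the letter `0` in a face (word over `{−,0,+}`) of the cube. -/
def zeros {N : ℕ} (a : Fin N → SignType) : Finset (Fin N) :=
  Finset.univ.filter fun i => a i = SignType.zero

/-- `b` is a subface of the cube face `a` iff at each position `b i = a i` or `a i = 0`. -/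
def subfaceC {N : ℕ} (b a : Fin N → SignType) : Prop :=
  ∀ i, b i = a i ∨ a i = SignType.zero

/-- `R(a)`: the set of all subfaces of a cube face `a`. -/
def RC {N : ℕ} (a : Fin N → SignType) : Set (Fin N → SignType) :=
  { b | subfaceC b a }

/-- `s_a` for a cube face `a`: replace the `j`-th zero (1-based) by `−` if `j` is odd
and by `+` if `j` is even. -/
def cubeS {N : ℕ} (a : Fin N → SignType) : Set (Fin N → SignType) :=
  { b | ∃ k : Fin (zeros a).card,
      b = Function.update a ((zeros a).orderEmbOfFin rfl k)
            (if k.val % 2 = 0 then SignType.neg else SignType.pos) }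

/-- `t_a` for a cube face `a`: replace the `j`-th zero (1-based) by `+` if `j` is odd
and by `−` if `j` is even. -/
def cubeT {N : ℕ} (a : Fin N → SignType) : Set (Fin N → SignType) :=
  { b | ∃ k : Fin (zeros a).card,
      b = Function.update a ((zeros a).orderEmbOfFin rfl k)
            (if k.val % 2 = 0 then SignType.pos else SignType.neg) }

/-- `∂^-R(a) = ⋃_{b ∈ s_a} R(b)` in the cube (`= ∅` when `dim a = 0` since `s_a = ∅`). -/
def bdryCneg {N : ℕ} (a : Fin N → SignType) : Set (Fin N → SignType) :=
  ⋃ b ∈ cubeS a, RC b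

/-- `∂^+R(a) = ⋃_{b ∈ t_a} R(b)` in the cube (`= ∅` when `dim a = 0` since `t_a = ∅`). -/
def bdryCpos {N : ℕ} (a : Fin N → SignType) : Set (Fin N → SignType) :=
  ⋃ b ∈ cubeT a, RC b

/-- `R(σ)`: the set of all subfaces (nonempty subsets) of a simplex face `σ`. -/
def RS {m : ℕ} (σ : Finset (Fin m)) : Set (Finset (Fin m)) :=
  { τ | τ.Nonempty ∧ τ ⊆ σ }

/-- `s_σ` for a simplex face `σ = {σ_0 < … < σ_r}`: the faces `σ \ {σ_{2k}}`. -/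
def simpS {m : ℕ} (σ : Finset (Fin m)) : Set (Finset (Fin m)) :=
  { τ | ∃ k : Fin σ.card, k.val % 2 = 0 ∧ τ = σ.erase (σ.orderEmbOfFin rfl k) }

/-- `t_σ` for a simplex face `σ = {σ_0 < … < σ_r}`: the faces `σ \ {σ_{2k+1}}`. -/
def simpT {m : ℕ} (σ : Finset (Fin m)) : Set (Finset (Fin m)) :=
  { τ | ∃ k : Fin σ.card, k.val % 2 = 1 ∧ τ = σ.erase (σ.orderEmbOfFin rfl k) }

/-- `∂^-R(σ) = ⋃_{τ ∈ s_σ} R(τ)` in the simplex (`= ∅` when `dim σ = 0`, since the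
removal of the unique vertex gives the empty set, which has no nonempty subsets). -/
def bdrySneg {m : ℕ} (σ : Finset (Fin m)) : Set (Finset (Fin m)) :=
  ⋃ τ ∈ simpS σ, RS τ

/-- `∂^+R(σ) = ⋃_{τ ∈ t_σ} R(τ)` in the simplex. -/
def bdrySpos {m : ℕ} (σ : Finset (Fin m)) : Set (Finset (Fin m)) :=
  ⋃ τ ∈ simpT σ, RS τ

/-- `phi σ` is the map `φ_n^-` sending a face `σ` of `Δ^n` to the face of `I^{n+1}`
whose letter at position `i` is `0` when `i ∈ σ` and `−` otherwise. -/
def phi {m : ℕ} (σ : Finset (Fin m)) : Fin m → SignType :=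
  fun i => if i ∈ σ then SignType.zero else SignType.neg

/-- `y^⊥ = {i : y i = 0}`, the unique `φ`-preimage of a cube face `y ∈ Im φ`. -/
def perpF {N : ℕ} (y : Fin N → SignType) : Finset (Fin N) :=
  Finset.univ.filter fun i => y i = SignType.zero

/-- `X^⊥ = { y^⊥ : y ∈ X ∩ Im φ }` for a set `X` of cube faces. -/
def perpSet {N : ℕ} (X : Set (Fin N → SignType)) : Set (Finset (Fin N)) :=
  { τ | ∃ y ∈ X, (∃ σ : Finset (Fin N), σ.Nonempty ∧ phi σ = y) ∧ τ = perpF y }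

/-- For every face `a` of `I^{n+1}` in the image of `φ_n^-`,
`(∂^-R(a))^⊥ = ∂^-R(a^⊥)`. -/
theorem stmt3 (n : ℕ) (a : Fin (n + 1) → SignType)
    (ha : ∃ σ : Finset (Fin (n + 1)), σ.Nonempty ∧ phi σ = a) :
    perpSet (bdryCneg a) = bdrySneg (perpF a) := by
  obtain ⟨σ, -, rfl⟩ := ha
  have hz : zeros (phi σ) = perpF (phi σ) := rfl
  have hp : ∀ τ : Finset (Fin (n + 1)), perpF (phi τ) = τ := by
    intro τ
    ext i
    by_cases h : i ∈ τ <;> simp [perpF, phi, h]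
  ext τ
  simp only [perpSet, bdryCneg, bdrySneg, cubeS, simpS, RC, RS, subfaceC, Set.mem_iUnion,
    Set.mem_setOf_eq, exists_prop]
  constructor
  · rintro ⟨y, ⟨b, ⟨k, rfl⟩, hb⟩, ⟨ρ, hρ, rfl⟩, rfl⟩
    rw [hp ρ]
    have hk := hb ((zeros (phi σ)).orderEmbOfFin rfl k)
    rw [Function.update_self] at hk
    have hk0 : k.val % 2 = 0 ∧ (zeros (phi σ)).orderEmbOfFin rfl k ∉ ρ := by
      by_cases h1 : k.val % 2 = 0 <;>
        by_cases h2 : (zeros (phi σ)).orderEmbOfFin rfl k ∈ ρ <;>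
        simp [phi, h1, h2] at hk ⊢
    refine ⟨_, ⟨k, hk0.1, rfl⟩, hρ, ?_⟩
    intro j hj
    have hne : j ≠ (zeros (phi σ)).orderEmbOfFin rfl k := fun h => hk0.2 (h ▸ hj)
    refine Finset.mem_erase.2 ⟨hne, ?_⟩
    have := hb j
    rw [Function.update_of_ne hne] at this
    rw [hp σ]
    by_contra hσ
    simp [phi, hj, hσ] at this
  · rintro ⟨b, ⟨k, hk, rfl⟩, hτ, hsub⟩
    refine ⟨phi τ, ⟨_, ⟨k, rfl⟩, ?_⟩, ⟨τ, hτ, rfl⟩, (hp τ).symm⟩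
    have hk' : (k : ℕ) % 2 = 0 := hk
    intro j
    by_cases hj : j = (zeros (phi σ)).orderEmbOfFin rfl k
    · left
      have : j ∉ τ := fun h => (Finset.mem_erase.1 (hsub h)).1 hj
      rw [← hj, Function.update_self, if_pos hk']
      simp [phi, this]
    · rw [Function.update_of_ne hj]
      by_cases hσ : j ∈ σ
      · right
        simp [phi, hσ]
      · left
        have : j ∉ τ := fun h => by
          have := (Finset.mem_erase.1 (hsub h)).2
          rw [hp σ] at this
          exact hσ this
        simp [phi, this, hσ]
end

section
/- For every n ≥ 0 and every face a of I^{n+1} lying in the image of φ_n^-, one has (∂^+R(a))^⊥ = ∂^+R(a^⊥), where the left-hand operator ∂^+ is computed in the cube I^{n+1} and the right-hand operator ∂^+ is computed in the simplex Δ^n. -/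
/-- `perpF` is a left inverse of `phi`. -/
theorem perpF_phi {m : ℕ} (σ : Finset (Fin m)) : perpF (phi σ) = σ := by
  ext i
  by_cases h : i ∈ σ <;> simp [perpF, phi, h]

/-- For every face `a` of `I^{n+1}` in the image of `φ_n^-`,
`(∂^+R(a))^⊥ = ∂^+R(a^⊥)`. -/
theorem stmt4 (n : ℕ) (a : Fin (n + 1) → SignType)
    (ha : ∃ σ : Finset (Fin (n + 1)), σ.Nonempty ∧ phi σ = a) :
    perpSet (bdryCpos a) = bdrySpos (perpF a) := by
  obtain ⟨σ, _, rfl⟩ := ha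
  have hz : zeros (phi σ) = perpF (phi σ) := rfl
  have hm : ∀ i, i ∈ perpF (phi σ) ↔ i ∈ σ := fun i => by rw [perpF_phi]
  ext τ
  simp only [perpSet, bdryCpos, bdrySpos, Set.mem_iUnion, Set.mem_ofPred_eq, cubeT, simpT, RC, RS]
  constructor
  · rintro ⟨y, ⟨b, ⟨k, rfl⟩, hy⟩, ⟨ρ, hρ, rfl⟩, rfl⟩
    rw [perpF_phi ρ]
    have hp := hy ((zeros (phi σ)).orderEmbOfFin rfl k)
    rw [Function.update_self] at hp
    by_cases hk : k.val % 2 = 0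
    · exfalso
      simp only [hk, if_true, phi] at hp
      split_ifs at hp <;> simp at hp
    · refine ⟨_, ⟨k, by omega, rfl⟩, hρ, ?_⟩
      intro i hi
      simp only [hk, if_false] at hp hy
      have hne : i ≠ (zeros (phi σ)).orderEmbOfFin rfl k := by
        rintro rfl
        simp only [phi] at hp
        rw [if_pos hi] at hp
        simp at hp
      refine Finset.mem_erase.2 ⟨hne, (hm i).2 ?_⟩
      have h := hy i
      rw [Function.update_of_ne hne] at h
      by_contra hc
      simp [phi, hi, hc] at h
  · rintro ⟨_, ⟨k, hk, rfl⟩, hτ, hsub⟩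
    refine ⟨phi τ, ⟨_, ⟨k, rfl⟩, ?_⟩, ⟨τ, hτ, rfl⟩, (perpF_phi τ).symm⟩
    have hk' : ¬ k.val % 2 = 0 := by omega
    intro i
    simp only [hk', if_false]
    by_cases hne : i = (zeros (phi σ)).orderEmbOfFin rfl k
    · left
      have hi : i ∉ τ := fun h => (Finset.mem_erase.1 (hsub h)).1 hne
      rw [hne, Function.update_self, ← hne]
      simp [phi, hi]
    · rw [Function.update_of_ne hne]
      by_cases hs : i ∈ σ
      · right; simp [phi, hs]
      · left
        have hi : i ∉ τ := fun h => hs ((hm i).1 (Finset.mem_erase.1 (hsub h)).2)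
        simp [phi, hs, hi]
end

section
/- Let n ≥ 0 and let X be a set of faces of I^{n+1} that is closed under passing to subfaces. For m ≥ 0 and α ∈ {−,+}, define (following Steiner's formula) d_m^α X := (∪_{a ∈ X, dim a ≤ m} R(a)) \ (∪_{b ∈ X, dim b = m+1} (R(b) \ ∂^α R(b))), and define d_m^α analogously for subface-closed sets of faces of Δ^n. Then X^⊥ is closed under passing to subfaces, and for every m ≥ 1 and every α ∈ {−,+} one has (d_m^α X)^⊥ = d_{m-1}^α (X^⊥). (This is the key computation in the proof that ⊥ sends valid composite expressions in I^{n+1} starting at the vertex −⋯− to valid composite expressions in Δ^n, shifting the composition index by one.) -/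
/-- Dimension of a cube face: the number of `0` letters. -/
def dimC {N : ℕ} (a : Fin N → SignType) : ℕ := (zeros a).card

/-- Dimension of a simplex face: `card − 1`. -/
def dimS {m : ℕ} (σ : Finset (Fin m)) : ℕ := σ.card - 1

/-- `∂^α R(a)` in the cube, `α ∈ {−,+}` coded by `Bool` (`false ↦ −`, `true ↦ +`). -/
def bdryC {N : ℕ} (α : Bool) (a : Fin N → SignType) : Set (Fin N → SignType) :=
  if α then bdryCpos a else bdryCneg a

/-- `∂^α R(σ)` in the simplex, `α ∈ {−,+}` coded by `Bool` (`false ↦ −`, `true ↦ +`). -/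
def bdryS {m : ℕ} (α : Bool) (σ : Finset (Fin m)) : Set (Finset (Fin m)) :=
  if α then bdrySpos σ else bdrySneg σ

/-- Steiner's operator
`d_m^α X := (⋃_{a ∈ X, dim a ≤ m} R(a)) \ (⋃_{b ∈ X, dim b = m+1} (R(b) \ ∂^α R(b)))`
for sets of cube faces. -/
def dOpC {N : ℕ} (α : Bool) (m : ℕ) (X : Set (Fin N → SignType)) :
    Set (Fin N → SignType) :=
  (⋃ a ∈ {a | a ∈ X ∧ dimC a ≤ m}, RC a) \
    (⋃ b ∈ {b | b ∈ X ∧ dimC b = m + 1}, RC b \ bdryC α b)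

/-- Steiner's operator `d_m^α` for sets of simplex faces. -/
def dOpS {N : ℕ} (α : Bool) (m : ℕ) (X : Set (Finset (Fin N))) :
    Set (Finset (Fin N)) :=
  (⋃ σ ∈ {σ | σ ∈ X ∧ dimS σ ≤ m}, RS σ) \
    (⋃ σ ∈ {σ | σ ∈ X ∧ dimS σ = m + 1}, RS σ \ bdryS α σ)

theorem mem_zeros {N : ℕ} (a : Fin N → SignType) (i : Fin N) :
    i ∈ zeros a ↔ a i = SignType.zero := by simp [zeros]

theorem zeros_phi {N : ℕ} (σ : Finset (Fin N)) : zeros (phi σ) = σ := by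
  ext i
  rw [mem_zeros]
  unfold phi
  split_ifs with h <;> simp [h]

theorem sub_phi {N : ℕ} (τ : Finset (Fin N)) (b : Fin N → SignType) :
    subfaceC (phi τ) b ↔ τ ⊆ zeros b ∧ ∀ i, b i ≠ SignType.pos := by
  constructor
  · intro h
    refine ⟨fun i hi => ?_, fun i hp => ?_⟩
    · rw [mem_zeros]
      rcases h i with h | h
      · rw [← h]; simp [phi, hi]
      · exact h
    · rcases h i with h | h
      · rw [hp] at h; unfold phi at h; split_ifs at h
      · rw [hp] at h; cases h
  · rintro ⟨h1, h2⟩ i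
    by_cases hi : i ∈ zeros b
    · right; rwa [mem_zeros] at hi
    · left
      have hτ : i ∉ τ := fun h => hi (h1 h)
      rw [mem_zeros] at hi
      have := h2 i
      simp only [phi, hτ, if_false]
      cases hb : b i
      · exact absurd hb hi
      · rfl
      · exact absurd hb this

theorem phi_zeros {N : ℕ} (b : Fin N → SignType) (h : ∀ i, b i ≠ SignType.pos) :
    phi (zeros b) = b := by
  funext i
  have := h i
  unfold phi
  split_ifs with hi
  · rw [mem_zeros] at hi; exact hi.symm
  · rw [mem_zeros] at hi
    cases hb : b i
    · exact absurd hb hi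
    · rfl
    · exact absurd hb this

theorem phi_nopos {N : ℕ} (σ : Finset (Fin N)) (i : Fin N) : phi σ i ≠ SignType.pos := by
  unfold phi; split_ifs <;> simp

theorem sub_upd {N : ℕ} (τ : Finset (Fin N)) (b : Fin N → SignType)
    (hb : ∀ i, b i ≠ SignType.pos) (p : Fin N) (v : SignType) (hv : v ≠ SignType.zero) :
    subfaceC (phi τ) (Function.update b p v) ↔
      v = SignType.neg ∧ τ ⊆ (zeros b).erase p := by
  have hz : zeros (Function.update b p v) = (zeros b).erase p := by
    ext i
    rw [Finset.mem_erase, mem_zeros, mem_zeros]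
    by_cases h : i = p
    · subst h; simp; exact hv
    · simp [Function.update_of_ne h, h]
  rw [sub_phi, hz, and_comm]
  refine and_congr_left fun _ => ⟨fun h => ?_, fun h i => ?_⟩
  · have := h p
    rw [Function.update_self] at this
    cases v
    · exact absurd rfl hv
    · rfl
    · exact absurd rfl this
  · by_cases hi : i = p
    · subst hi; rw [Function.update_self, h]; simp
    · rw [Function.update_of_ne hi]; exact hb i

theorem bdry_iff {N : ℕ} (α : Bool) (τ : Finset (Fin N)) (hτ : τ.Nonempty)
    (b : Fin N → SignType) (hb : ∀ i, b i ≠ SignType.pos) :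
    phi τ ∈ bdryC α b ↔ τ ∈ bdryS α (zeros b) := by
  cases α
  · simp only [bdryC, bdryS, bdryCneg, bdrySneg, cubeS, simpS, RC, RS, Set.mem_iUnion,
      Set.mem_setOf_eq, Bool.false_eq_true, if_false, exists_prop]
    constructor
    · rintro ⟨_, ⟨k, rfl⟩, h⟩
      rw [sub_upd _ _ hb _ _ (by split_ifs <;> simp)] at h
      refine ⟨_, ⟨k, ?_, rfl⟩, hτ, h.2⟩
      by_contra hk
      simp [hk] at h
    · rintro ⟨_, ⟨k, hk, rfl⟩, _, h⟩
      refine ⟨_, ⟨k, rfl⟩, ?_⟩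
      rw [sub_upd _ _ hb _ _ (by split_ifs <;> simp)]
      exact ⟨by simp [hk], h⟩
  · simp only [bdryC, bdryS, bdryCpos, bdrySpos, cubeT, simpT, RC, RS, Set.mem_iUnion,
      Set.mem_setOf_eq, if_true, exists_prop]
    constructor
    · rintro ⟨_, ⟨k, rfl⟩, h⟩
      rw [sub_upd _ _ hb _ _ (by split_ifs <;> simp)] at h
      refine ⟨_, ⟨k, ?_, rfl⟩, hτ, h.2⟩
      by_contra hk
      have hk : k.val % 2 = 0 := by omega
      simp [hk] at h
    · rintro ⟨_, ⟨k, hk, rfl⟩, _, h⟩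
      refine ⟨_, ⟨k, rfl⟩, ?_⟩
      rw [sub_upd _ _ hb _ _ (by split_ifs <;> simp)]
      exact ⟨by simp [hk], h⟩

theorem mem_perp {N : ℕ} (X : Set (Fin N → SignType)) (τ : Finset (Fin N)) :
    τ ∈ perpSet X ↔ τ.Nonempty ∧ phi τ ∈ X := by
  constructor
  · rintro ⟨y, hy, ⟨σ, hσ, rfl⟩, h⟩
    have : perpF (phi σ) = σ := zeros_phi σ
    rw [this] at h
    subst h
    exact ⟨hσ, hy⟩
  · rintro ⟨h1, h2⟩
    exact ⟨_, h2, ⟨τ, h1, rfl⟩, (zeros_phi τ).symm⟩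

/-- If `X` is a subface-closed set of faces of `I^{n+1}`, then `X^⊥` is closed under
passing to (nonempty) subfaces, and for every `m ≥ 1` and `α ∈ {−,+}` one has
`(d_m^α X)^⊥ = d_{m-1}^α (X^⊥)`. -/
theorem stmt5 (n : ℕ) (X : Set (Fin (n + 1) → SignType))
    (hX : ∀ a ∈ X, ∀ b, subfaceC b a → b ∈ X) (m : ℕ) (hm : 1 ≤ m) (α : Bool) :
    (∀ σ ∈ perpSet X, ∀ τ : Finset (Fin (n + 1)), τ.Nonempty → τ ⊆ σ →
        τ ∈ perpSet X) ∧
    perpSet (dOpC α m X) = dOpS α (m - 1) (perpSet X) := by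
  have hcl : ∀ σ ∈ perpSet X, ∀ τ : Finset (Fin (n + 1)), τ.Nonempty → τ ⊆ σ →
        τ ∈ perpSet X := by
    intro σ hσ τ hτ hs
    rw [mem_perp] at hσ ⊢
    refine ⟨hτ, hX _ hσ.2 _ ?_⟩
    rw [sub_phi, zeros_phi]
    exact ⟨hs, phi_nopos σ⟩
  refine ⟨hcl, ?_⟩
  ext τ
  rw [mem_perp]
  simp only [dOpC, dOpS, Set.mem_diff, Set.mem_iUnion, Set.mem_setOf_eq, exists_prop, RC, RS,
    not_exists, not_and, not_not]
  constructor
  · rintro ⟨hτ, ⟨a, ⟨ha, had⟩, hs⟩, h⟩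
    rw [sub_phi] at hs
    have ha' : zeros a ∈ perpSet X := by
      rw [mem_perp, phi_zeros a hs.2]
      exact ⟨hτ.mono hs.1, ha⟩
    refine ⟨⟨zeros a, ⟨ha', ?_⟩, hτ, hs.1⟩, ?_⟩
    · unfold dimS; unfold dimC at had; omega
    · rintro σ ⟨hσ, hd⟩ ⟨_, hsub⟩
      rw [mem_perp] at hσ
      have := h (phi σ) ⟨hσ.2, ?_⟩ ?_
      · rwa [bdry_iff α τ hτ _ (phi_nopos σ), zeros_phi] at this
      · unfold dimS at hd; unfold dimC; rw [zeros_phi]; omega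
      · rw [sub_phi, zeros_phi]; exact ⟨hsub, phi_nopos σ⟩
  · rintro ⟨⟨σ, ⟨hσ, hd⟩, hτ, hsub⟩, h⟩
    have hσ2 := hσ
    rw [mem_perp] at hσ2
    refine ⟨hτ, ⟨phi σ, ⟨hσ2.2, ?_⟩, ?_⟩, ?_⟩
    · unfold dimS at hd; unfold dimC; rw [zeros_phi]; omega
    · rw [sub_phi, zeros_phi]; exact ⟨hsub, phi_nopos σ⟩
    · rintro b ⟨hb, hbd⟩ hs
      rw [sub_phi] at hs
      rw [bdry_iff α τ hτ b hs.2]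
      refine h (zeros b) ⟨?_, ?_⟩ ⟨hτ, hs.1⟩
      · rw [mem_perp, phi_zeros b hs.2]
        exact ⟨hτ.mono hs.1, hb⟩
      · unfold dimS; unfold dimC at hbd; omega
end

section
/- Fix n ≥ 0 and 0 ≤ i ≤ n. For every face σ of Δ^{n+1} one has φ_n^-(η_i·σ) = γ_{i+1}^-(φ_{n+1}^-(σ)), where η_i·σ := {η_i(j) : j ∈ σ} (the image of σ under the codegeneracy map η_i of the simplex category) and γ_{i+1}^- is the map sending a word k_1⋯k_{n+2} of length n+2 over {−,0,+} to the word k_1⋯k_i max(k_{i+1},k_{i+2}) k_{i+3}⋯k_{n+2} of length n+1, the maximum being taken with respect to the order − < 0 < +. In other words, the square relating the simplicial codegeneracy operators on the simplexes Δ^* to the operators γ^-_{i+1} on the cubes I^{*+1} via the maps φ_*^- commutes. -/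
/-- `γ_{i+1}^-`: the map sending a word `k_0 ⋯ k_{n+1}` of length `n+2` over `{−,0,+}`
to the word of length `n+1` keeping the letters before position `i`, replacing the two
letters at positions `i, i+1` by their maximum (for `− < 0 < +`), and keeping the
letters after them. -/
def gammaNeg {n : ℕ} (i : Fin (n + 1)) (k : Fin (n + 2) → SignType) :
    Fin (n + 1) → SignType :=
  fun ℓ =>
    if ℓ.val < i.val then k ℓ.castSucc
    else if ℓ = i then max (k ℓ.castSucc) (k ℓ.succ)
    else k ℓ.succ

/-- For every face `σ` of `Δ^{n+1}`, `φ_n^-(η_i·σ) = γ_{i+1}^-(φ_{n+1}^-(σ))`, where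
`η_i·σ` is the image of `σ` under the codegeneracy map `η_i` (`j ↦ j` for `j ≤ i`,
`j ↦ j−1` for `j > i`, i.e. `Fin.predAbove i`). -/
theorem stmt7 (n : ℕ) (i : Fin (n + 1)) (σ : Finset (Fin (n + 2)))
    (hσ : σ.Nonempty) :
    phi (σ.image (Fin.predAbove i)) = gammaNeg i (phi σ) := by
  have key : ∀ (j : Fin (n + 2)) (l : Fin (n + 1)), Fin.predAbove i j = l ↔
      (j.val ≤ i.val ∧ j = l.castSucc) ∨ (i.val < j.val ∧ j = l.succ) := by
    intro j l
    by_cases h : i.castSucc < j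
    · rw [Fin.predAbove_of_castSucc_lt _ _ h]
      have h3 := h
      rw [Fin.lt_def, Fin.val_castSucc] at h3
      simp only [Fin.ext_iff, Fin.val_castSucc, Fin.val_pred, Fin.val_succ]
      omega
    · rw [Fin.predAbove_of_le_castSucc _ _ (not_lt.mp h)]
      have h3 := h
      rw [Fin.lt_def, Fin.val_castSucc] at h3
      simp only [Fin.ext_iff, Fin.val_castSucc, Fin.coe_castPred, Fin.val_succ]
      omega
  funext l
  have mem : l ∈ σ.image (Fin.predAbove i) ↔
      (l.val ≤ i.val ∧ l.castSucc ∈ σ) ∨ (i.val ≤ l.val ∧ l.succ ∈ σ) := by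
    rw [Finset.mem_image]
    constructor
    · rintro ⟨j, hj, e⟩
      rcases (key j l).1 e with ⟨h, rfl⟩ | ⟨h, rfl⟩
      · exact Or.inl ⟨by simpa using h, hj⟩
      · exact Or.inr ⟨by simp only [Fin.val_succ] at h; omega, hj⟩
    · rintro (⟨h, hj⟩ | ⟨h, hj⟩)
      · exact ⟨_, hj, (key _ l).2 (Or.inl ⟨by simpa using h, rfl⟩)⟩
      · exact ⟨_, hj, (key _ l).2 (Or.inr ⟨by simp only [Fin.val_succ]; omega, rfl⟩)⟩
  unfold gammaNeg phi
  simp only [mem, Fin.ext_iff]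
  rcases lt_trichotomy l.val i.val with h | h | h
  · simp [h, h.le, not_le.mpr h]
  · by_cases h1 : l.castSucc ∈ σ <;> by_cases h2 : l.succ ∈ σ <;> simp [h, h1, h2] <;> decide
  · simp [h.not_gt, h.le, not_le.mpr h, h.ne']
end

section
/- Order the three-letter alphabet T = {−,0,+} by − < 0 < +. For each n ≥ 0 let F([n]) be the set of functions from {0,1,…,n} to T, and for a monotone map f : {0,…,m} → {0,…,n} let F(f) : F([m]) → F([n]) send w to the function j ↦ sup{w(k) : f(k) = j}, where the supremum of the empty set is −. Then F is a functor from the simplex category (finite nonempty linear orders [n] with monotone maps) to the category of sets; moreover F(ε_i) is the map inserting the letter − at the i-th coordinate (so that coordinate i of F(ε_i)(w) is − and the other coordinates are those of w in order), and F(η_i) is the map merging coordinates i and i+1 by taking their maximum. (This is the combinatorial, face-level content of the statement that [n] ↦ P^-_{R(−⋯−)}(I^{n+1}) with the maps induced by δ^-_{i+1} and γ^-_{i+1} defines a functor from the simplex category isomorphic to the cosimplicial ω-category Δ^*.) -/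
/-- `F` on objects: `F([n])` is the set of functions from `{0,…,n}` to the ordered
three-letter alphabet `T = {− < 0 < +}` (realized as `SignType`); on morphisms,
`Fmap f` sends `w` to `j ↦ sup { w k : f k = j }`, where the supremum of the empty set
is `−` (`⊥` in `SignType` is `−`). -/
def Fmap {m n : ℕ} (f : Fin m → Fin n) (w : Fin m → SignType) : Fin n → SignType :=
  fun j => (Finset.univ.filter fun k => f k = j).sup w

/-- `F` is a functor from the simplex category (finite nonempty linear orders with
monotone maps) to sets: it preserves identities and composition of monotone maps;
moreover `F(ε_i)` is the map inserting the letter `−` at the `i`-th coordinate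
(`ε_i = Fin.succAbove i`, insertion via `Fin.insertNth`), and `F(η_i)` is the map
merging coordinates `i` and `i+1` by taking their maximum
(`η_i = Fin.predAbove i`). -/
theorem stmt8 :
    (∀ (m : ℕ) (w : Fin m → SignType), Fmap (id : Fin m → Fin m) w = w) ∧
    (∀ (m n p : ℕ) (f : Fin m → Fin n) (g : Fin n → Fin p),
        Monotone f → Monotone g → ∀ w : Fin m → SignType,
        Fmap (g ∘ f) w = Fmap g (Fmap f w)) ∧
    ((⊥ : SignType) = SignType.neg) ∧
    (∀ (n : ℕ) (i : Fin (n + 1)) (w : Fin n → SignType),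
        Fmap (Fin.succAbove i) w =
          (Fin.insertNth i SignType.neg w : Fin (n + 1) → SignType)) ∧
    (∀ (n : ℕ) (i : Fin (n + 1)) (w : Fin (n + 2) → SignType),
        Fmap (Fin.predAbove i) w = fun ℓ : Fin (n + 1) =>
          if ℓ.val < i.val then w ℓ.castSucc
          else if ℓ = i then max (w ℓ.castSucc) (w ℓ.succ)
          else w ℓ.succ) := by
  have key : ∀ {m n : ℕ} (f : Fin m → Fin n) (w : Fin m → SignType) (j : Fin n) (c : SignType),
      Fmap f w j ≤ c ↔ ∀ k, f k = j → w k ≤ c := by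
    intro m n f w j c
    simp [Fmap, Finset.sup_le_iff]
  refine ⟨?_, ?_, rfl, ?_, ?_⟩
  · intro m w
    funext j
    refine eq_of_forall_ge_iff fun c => ?_
    rw [key]
    simp
  · intro m n p f g _ _ w
    funext j
    refine eq_of_forall_ge_iff fun c => ?_
    simp only [key, Function.comp]
    constructor
    · rintro h k hk l rfl
      exact h l hk
    · intro h k hk
      exact h (f k) hk k rfl
  · intro n i w
    funext j
    refine eq_of_forall_ge_iff fun c => ?_
    rw [key]
    rcases Fin.eq_self_or_eq_succAbove i j with rfl | ⟨j, rfl⟩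
    · simp only [Fin.insertNth_apply_same]
      constructor
      · intro _
        exact (bot_le : (⊥ : SignType) ≤ c)
      · intro _ k hk
        exact absurd hk (Fin.succAbove_ne _ k)
    · simp
  · intro n i w
    funext l
    refine eq_of_forall_ge_iff fun c => ?_
    rw [key]
    have h1 : ∀ k : Fin (n + 2), Fin.predAbove i k = l ↔
        (k = l.castSucc ∧ l.val ≤ i.val) ∨ (k = l.succ ∧ i.val ≤ l.val) := by
      intro k
      rw [Fin.predAbove]
      split_ifs with h
      · simp only [Fin.ext_iff, Fin.lt_def, Fin.val_castSucc, Fin.val_succ, Fin.val_pred] at h ⊢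
        omega
      · simp only [Fin.ext_iff, Fin.lt_def, Fin.val_castSucc, Fin.val_succ, Fin.coe_castPred] at h ⊢
        omega
    simp only [h1]
    split_ifs with h2 h3
    · constructor
      · intro h
        exact h _ (Or.inl ⟨rfl, h2.le⟩)
      · rintro h k (⟨rfl, _⟩ | ⟨rfl, h4⟩)
        · exact h
        · omega
    · subst h3
      rw [max_le_iff]
      constructor
      · intro h
        exact ⟨h _ (Or.inl ⟨rfl, le_rfl⟩), h _ (Or.inr ⟨rfl, le_rfl⟩)⟩
      · rintro ⟨ha, hb⟩ k (⟨rfl, _⟩ | ⟨rfl, _⟩)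
        · exact ha
        · exact hb
    · have h4 : l.val ≠ i.val := fun h => h3 (Fin.ext h)
      constructor
      · intro h
        exact h _ (Or.inr ⟨rfl, by omega⟩)
      · rintro h k (⟨rfl, _⟩ | ⟨rfl, _⟩)
        · omega
        · exact h
end
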